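/- For every graph G with n vertices and m edges, ψ_3(G) ≤ (2n + m)/6. -/

import Mathlib

open SimpleGraph

variable {V : Type*}

/-- `S` is a `k`-path vertex cover of `G`: every path on `k` vertices meets `S`. -/
def IsPathVC (G : SimpleGraph V) (k : ℕ) (S : Set V) : Prop :=
  ∀ ⦃u v : V⦄ (w : G.Walk u v), w.IsPath → w.length + 1 = k → ∃ x ∈ w.support, x ∈ S

/-- `psi G k` is the minimum cardinality of a `k`-path vertex cover of `G`. -/
noncomputable def psi (G : SimpleGraph V) (k : ℕ) : ℕ :=
  sInf {n | ∃ S : Set V, IsPathVC G k S ∧ S.ncard = n}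

/-!
Induction on the number of vertices. Suppose deleting a vertex set `D` leaves a set `S` of at most
two vertices without further neighbours. No path of order 3 in `G - D` meets `S`, so
`ψ₃(G) ≤ ψ₃(G - S - D) + |D|`, and the bound passes from `G - S - D` to `G` once
`6 |D| ≤ 2 |S ∪ D| + deg u` for some `u ∈ S ∪ D`. Such a pair exists around every vertex of degree
at most 1 or at least 4. If all degrees are 2 or 3, then `n ≤ m`, and Lovász's partition argument
applies: in a 2-colouring with the fewest monochromatic edges each vertex has at most one neighbour
of its own colour, so the smaller colour class is a cover and `ψ₃(G) ≤ n / 2 ≤ (2n + m) / 6`.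
-/

section Covers

lemma psi_le_ncard {G : SimpleGraph V} {k : ℕ} {S : Set V} (hS : IsPathVC G k S) :
    psi G k ≤ S.ncard :=
  Nat.sInf_le ⟨S, hS, rfl⟩

lemma exists_isPathVC_ncard_eq_psi (G : SimpleGraph V) (k : ℕ) :
    ∃ S : Set V, IsPathVC G k S ∧ S.ncard = psi G k :=
  Nat.sInf_mem (s := {n | ∃ S : Set V, IsPathVC G k S ∧ S.ncard = n})
    ⟨_, Set.univ, fun u _ w _ _ ↦ ⟨u, w.start_mem_support, trivial⟩, rfl⟩

lemma isPathVC_three_of_subsingleton_neighborSet_diff {G : SimpleGraph V} {S : Set V}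
    (hS : ∀ v ∉ S, (G.neighborSet v \ S).Subsingleton) : IsPathVC G 3 S := by
  intro a c w hw hlen
  match w, hw, hlen with
  | .cons (v := b) hab (.cons hbc .nil), hw, _ =>
    by_contra! hdisj
    simp only [Walk.support_cons, Walk.support_nil, List.mem_cons, List.not_mem_nil, or_false,
      forall_eq_or_imp, forall_eq] at hdisj
    obtain ⟨ha, hb, hc⟩ := hdisj
    have hac : a = c := hS b hb ⟨hab.symm, ha⟩ ⟨hbc, hc⟩
    simp [hac] at hw

lemma mem_iff_start_mem_of_disjoint_support {G : SimpleGraph V} {S D : Set V}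
    (hSD : ∀ x ∈ S, G.neighborSet x ⊆ S ∪ D) {u v : V} (w : G.Walk u v)
    (hw : ∀ x ∈ w.support, x ∉ D) : ∀ x ∈ w.support, x ∈ S ↔ u ∈ S := by
  induction w with
  | nil => simp
  | @cons a b _ hab w ih =>
    simp only [Walk.support_cons, List.mem_cons, forall_eq_or_imp] at hw ⊢
    have hb : b ∉ D := hw.2 b w.start_mem_support
    have hba : b ∈ S ↔ a ∈ S :=
      ⟨fun h ↦ (hSD b h hab.symm).resolve_right hw.1, fun h ↦ (hSD a h hab).resolve_right hb⟩
    exact ⟨trivial, fun x hx ↦ (ih hw.2 x hx).trans hba⟩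

lemma length_lt_ncard_of_isPath {G : SimpleGraph V} {S : Set V} (hS : S.Finite) {u v : V}
    {w : G.Walk u v} (hw : w.IsPath) (hwS : ∀ x ∈ w.support, x ∈ S) : w.length < S.ncard := by
  classical
  calc w.length < w.support.length := by simp
    _ = w.support.toFinset.card := (List.toFinset_card_of_nodup hw.support_nodup).symm
    _ = (w.support.toFinset : Set V).ncard := (Set.ncard_coe_finset _).symm
    _ ≤ S.ncard := Set.ncard_le_ncard (fun x hx ↦ hwS x (by simpa using hx)) hS

lemma IsPathVC.image_union {G : SimpleGraph V} {k : ℕ} {S D : Set V} (hfin : S.Finite)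
    (hS : S.ncard < k) (hSD : ∀ x ∈ S, G.neighborSet x ⊆ S ∪ D) {X : Set ↥(S ∪ D)ᶜ}
    (hX : IsPathVC (G.induce (S ∪ D)ᶜ) k X) : IsPathVC G k (Subtype.val '' X ∪ D) := by
  intro u v w hw hlen
  by_cases hD : ∃ x ∈ w.support, x ∈ D
  · obtain ⟨x, hxw, hxD⟩ := hD
    exact ⟨x, hxw, Or.inr hxD⟩
  push Not at hD
  have hmem := mem_iff_start_mem_of_disjoint_support hSD w hD
  have huS : u ∉ S := fun hu ↦ by
    have := length_lt_ncard_of_isPath hfin hw fun x hx ↦ (hmem x hx).2 hu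
    omega
  have hout : ∀ x ∈ w.support, x ∈ (S ∪ D)ᶜ := fun x hx hxSD ↦
    hxSD.elim (fun hxS ↦ huS ((hmem x hx).1 hxS)) (hD x hx)
  have hpath : (w.induce _ hout).IsPath :=
    .of_map (f := (Embedding.induce _).toHom) (by rwa [Walk.map_induce])
  have hlength : (w.induce _ hout).length = w.length := by
    rw [← Walk.length_map (Embedding.induce _).toHom, Walk.map_induce]
    rfl
  obtain ⟨x, hxw, hxX⟩ := hX _ hpath (hlength ▸ hlen)
  rw [Walk.support_induce, List.mem_attachWith] at hxw
  exact ⟨x, hxw, Or.inl ⟨x, hxX, rfl⟩⟩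

lemma psi_le_psi_induce_add_ncard {G : SimpleGraph V} {k : ℕ} {S D : Set V} (hfin : S.Finite)
    (hS : S.ncard < k) (hSD : ∀ x ∈ S, G.neighborSet x ⊆ S ∪ D) :
    psi G k ≤ psi (G.induce (S ∪ D)ᶜ) k + D.ncard := by
  obtain ⟨X, hX, hcard⟩ := exists_isPathVC_ncard_eq_psi (G.induce (S ∪ D)ᶜ) k
  calc psi G k ≤ (Subtype.val '' X ∪ D).ncard := psi_le_ncard (hX.image_union hfin hS hSD)
    _ ≤ (Subtype.val '' X).ncard + D.ncard := Set.ncard_union_le _ _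
    _ = psi (G.induce (S ∪ D)ᶜ) k + D.ncard := by
      rw [Set.ncard_image_of_injective _ Subtype.val_injective, hcard]

end Covers

section Edges

lemma ncard_edgeSet_induce_le [Finite V] (G : SimpleGraph V) (s : Set V) :
    (G.induce s).edgeSet.ncard ≤ G.edgeSet.ncard :=
  Nat.card_le_card_of_injective _ (Embedding.induce s).mapEdgeSet.injective

lemma ncard_edgeSet_deleteIncidenceSet_add_degree [Fintype V] (G : SimpleGraph V)
    [DecidableRel G.Adj] (v : V) :
    (G.deleteIncidenceSet v).edgeSet.ncard + G.degree v = G.edgeSet.ncard := by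
  classical
  rw [edgeSet_deleteIncidenceSet, ← card_incidenceSet_eq_degree, ← Nat.card_eq_fintype_card]
  exact Set.ncard_sdiff_add_ncard_of_subset (G.incidenceSet_subset v)

lemma ncard_edgeSet_induce_compl_add_degree_le [Fintype V] (G : SimpleGraph V)
    [DecidableRel G.Adj] {s : Set V} {v : V} (hv : v ∈ s) :
    (G.induce sᶜ).edgeSet.ncard + G.degree v ≤ G.edgeSet.ncard := by
  rw [← G.induce_deleteIncidenceSet_of_notMem (Set.notMem_compl_iff.2 hv),
    ← ncard_edgeSet_deleteIncidenceSet_add_degree G v]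
  gcongr
  exact ncard_edgeSet_induce_le _ _

lemma mul_card_le_two_mul_ncard_edgeSet [Fintype V] {G : SimpleGraph V} [DecidableRel G.Adj]
    {d : ℕ} (hd : ∀ v, d ≤ G.degree v) : d * Fintype.card V ≤ 2 * G.edgeSet.ncard := by
  rw [← coe_edgeFinset G, Set.ncard_coe_finset, ← G.sum_degrees_eq_twice_card_edges, mul_comm,
    ← smul_eq_mul]
  exact Finset.card_nsmul_le_sum _ _ _ fun v _ ↦ hd v

end Edges

section Coloring

variable {κ : Type*}

lemma isPathVC_three_compl_fiber {G : SimpleGraph V} {f : V → κ}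
    (hf : ∀ v, (G.neighborSet v ∩ f ⁻¹' {f v}).Subsingleton) (c : κ) :
    IsPathVC G 3 (f ⁻¹' {c})ᶜ := by
  refine isPathVC_three_of_subsingleton_neighborSet_diff fun v hv ↦ ?_
  obtain rfl : f v = c := by simpa using hv
  rw [Set.sdiff_eq, compl_compl]
  exact hf v

/-- The subgraph of `G` formed by the edges whose two ends get the same colour from the (not
necessarily proper) colouring `f`. The colouring used for bounded degrees minimises its size. -/
def monochromaticSubgraph (G : SimpleGraph V) (f : V → κ) : SimpleGraph V where
  Adj u v := G.Adj u v ∧ f u = f v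
  symm := ⟨fun _ _ h ↦ ⟨h.1.symm, h.2.symm⟩⟩
  loopless := ⟨fun _ h ↦ h.1.ne rfl⟩

instance (G : SimpleGraph V) [DecidableRel G.Adj] [DecidableEq κ] (f : V → κ) :
    DecidableRel (monochromaticSubgraph G f).Adj :=
  fun u v ↦ inferInstanceAs (Decidable (G.Adj u v ∧ f u = f v))

lemma deleteIncidenceSet_monochromaticSubgraph_update [DecidableEq V] (G : SimpleGraph V)
    (f : V → κ) (v : V) (c : κ) :
    (monochromaticSubgraph G (Function.update f v c)).deleteIncidenceSet v =
      (monochromaticSubgraph G f).deleteIncidenceSet v := by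
  ext x y
  simp only [deleteIncidenceSet_adj, monochromaticSubgraph]
  grind

variable [Fintype V] [DecidableEq κ]

lemma degree_monochromaticSubgraph (G : SimpleGraph V) [DecidableRel G.Adj] (f : V → κ) (v : V) :
    (monochromaticSubgraph G f).degree v = {w ∈ G.neighborFinset v | f w = f v}.card := by
  rw [← card_neighborFinset_eq_degree]
  congr 1
  ext w
  rw [mem_neighborFinset, Finset.mem_filter, mem_neighborFinset, eq_comm (a := f w)]
  rfl

lemma degree_monochromaticSubgraph_update [DecidableEq V] (G : SimpleGraph V) [DecidableRel G.Adj]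
    (f : V → κ) (v : V) (c : κ) :
    (monochromaticSubgraph G (Function.update f v c)).degree v =
      {w ∈ G.neighborFinset v | f w = c}.card := by
  rw [degree_monochromaticSubgraph]
  congr 1
  refine Finset.filter_congr fun w hw ↦ ?_
  have hwv : w ≠ v := ((G.mem_neighborFinset v w).1 hw).ne'
  simp [hwv]

lemma exists_coloring_card_neighborFinset_filter_le [Finite κ] [Nonempty κ] (G : SimpleGraph V)
    [DecidableRel G.Adj] :
    ∃ f : V → κ, ∀ v c, {w ∈ G.neighborFinset v | f w = f v}.card ≤
      {w ∈ G.neighborFinset v | f w = c}.card := by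
  classical
  obtain ⟨f, hf⟩ := Finite.exists_min fun f : V → κ ↦ (monochromaticSubgraph G f).edgeSet.ncard
  refine ⟨f, fun v c ↦ ?_⟩
  rw [← degree_monochromaticSubgraph, ← degree_monochromaticSubgraph_update]
  have hmin := hf (Function.update f v c)
  have hf_edges := ncard_edgeSet_deleteIncidenceSet_add_degree (monochromaticSubgraph G f) v
  have hupdate_edges := ncard_edgeSet_deleteIncidenceSet_add_degree
    (monochromaticSubgraph G (Function.update f v c)) v
  rw [deleteIncidenceSet_monochromaticSubgraph_update] at hupdate_edges
  omega

lemma exists_coloring_mul_card_neighborFinset_filter_le_degree [Fintype κ] [Nonempty κ]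
    (G : SimpleGraph V) [DecidableRel G.Adj] :
    ∃ f : V → κ, ∀ v,
      Fintype.card κ * {w ∈ G.neighborFinset v | f w = f v}.card ≤ G.degree v := by
  obtain ⟨f, hf⟩ := exists_coloring_card_neighborFinset_filter_le (κ := κ) G
  refine ⟨f, fun v ↦ ?_⟩
  calc Fintype.card κ * {w ∈ G.neighborFinset v | f w = f v}.card
      ≤ ∑ c, {w ∈ G.neighborFinset v | f w = c}.card :=
        Finset.card_nsmul_le_sum _ _ _ fun c _ ↦ hf v c
    _ = (G.neighborFinset v).card := (Finset.card_eq_sum_card_fiberwise (by simp)).symm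
    _ = G.degree v := G.card_neighborFinset_eq_degree v

lemma mul_psi_three_add_card_le_of_degree_lt {G : SimpleGraph V} [DecidableRel G.Adj]
    {r : ℕ} [NeZero r] (hdeg : ∀ v, G.degree v < 2 * r) :
    r * psi G 3 + Fintype.card V ≤ r * Fintype.card V := by
  obtain ⟨f, hf⟩ := exists_coloring_mul_card_neighborFinset_filter_le_degree (κ := Fin r) G
  have hsub (v : V) : (G.neighborSet v ∩ f ⁻¹' {f v}).Subsingleton := by
    have hlt := (hf v).trans_lt (hdeg v)
    rw [Fintype.card_fin, mul_comm 2] at hlt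
    have hle_one := Nat.lt_succ_iff.1 (Nat.lt_of_mul_lt_mul_left hlt)
    intro a ha b hb
    exact Finset.card_le_one.1 hle_one a (by simpa using ha) b (by simpa using hb)
  have hsum : Fintype.card V = ∑ c, (f ⁻¹' {c}).ncard := by
    rw [← Finset.card_univ, Finset.card_eq_sum_card_fiberwise (f := f) (t := Finset.univ) (by simp)]
    refine Finset.sum_congr rfl fun c _ ↦ ?_
    rw [← Set.ncard_coe_finset]
    congr 1
    ext v
    simp
  calc r * psi G 3 + Fintype.card V
      = ∑ c, ((f ⁻¹' {c}).ncard + psi G 3) := by simp [Finset.sum_add_distrib, hsum, add_comm]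
    _ ≤ ∑ c, ((f ⁻¹' {c}).ncard + (f ⁻¹' {c})ᶜ.ncard) := by
        gcongr with c
        exact psi_le_ncard (isPathVC_three_compl_fiber hsub c)
    _ = r * Fintype.card V := by
        simp [fun c ↦ Set.ncard_add_ncard_compl (f ⁻¹' {c})]

end Coloring

section Reduction

/-- A configuration whose removal preserves the bound `6 ψ₃ ≤ 2n + m`: once `D` is deleted, `S` has
no neighbours outside itself and is too small to contain a path of order 3. The edges at a single
vertex `u` of `S ∪ D` are the only removed edges that enter the count. -/
structure IsReducible [Fintype V] (G : SimpleGraph V) [DecidableRel G.Adj] (S D : Set V) :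
    Prop where
  ncard_lt_three : S.ncard < 3
  neighborSet_subset : ∀ x ∈ S, G.neighborSet x ⊆ S ∪ D
  exists_le_degree : ∃ u ∈ S ∪ D, 6 * D.ncard ≤ 2 * (S ∪ D).ncard + G.degree u

variable [Fintype V] {G : SimpleGraph V} [DecidableRel G.Adj]

lemma IsReducible.ncard_compl_lt {S D : Set V} (h : IsReducible G S D) :
    (S ∪ D)ᶜ.ncard < Nat.card V := by
  obtain ⟨u, hu, -⟩ := h.exists_le_degree
  exact Set.ncard_lt_card fun heq ↦ (heq ▸ Set.mem_univ u : u ∈ (S ∪ D)ᶜ) hu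

lemma IsReducible.six_mul_psi_three_le {S D : Set V} (h : IsReducible G S D)
    (hbound : 6 * psi (G.induce (S ∪ D)ᶜ) 3 ≤
      2 * (S ∪ D)ᶜ.ncard + (G.induce (S ∪ D)ᶜ).edgeSet.ncard) :
    6 * psi G 3 ≤ 2 * Nat.card V + G.edgeSet.ncard := by
  obtain ⟨u, hu, hdeg⟩ := h.exists_le_degree
  have hpsi := psi_le_psi_induce_add_ncard S.toFinite h.ncard_lt_three h.neighborSet_subset
  have hedges := ncard_edgeSet_induce_compl_add_degree_le G hu
  have hverts := Set.ncard_add_ncard_compl (S ∪ D)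
  omega

lemma exists_isReducible_of_degree_eq_one {v : V} (hv : G.degree v = 1) :
    ∃ S D, IsReducible G S D := by
  obtain ⟨u, hadj, huniq⟩ := degree_eq_one_iff_existsUnique_adj.1 hv
  have hcard : ({u, v} : Set V).ncard = 2 := Set.ncard_pair hadj.ne'
  by_cases hu : G.degree u = 1
  · have huniq' : ∀ w, G.Adj u w → w = v := fun w hw ↦
      (degree_eq_one_iff_existsUnique_adj.1 hu).unique hw hadj.symm
    refine ⟨{u, v}, ∅, by omega, ?_, u, by simp, by simp⟩
    rintro x (rfl | rfl) w hw
    · simp [huniq' w hw]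
    · simp [huniq w hw]
  · have hpos : 0 < G.degree u := (G.degree_pos_iff_exists_adj u).2 ⟨v, hadj.symm⟩
    refine ⟨{v}, {u}, by simp, ?_, u, by simp, ?_⟩
    · rintro x rfl w hw
      simp [huniq w hw]
    · rw [Set.singleton_union, Set.pair_comm, hcard, Set.ncard_singleton]
      omega

lemma exists_isReducible_of_degree_notMem_Icc {v : V} (hv : G.degree v ∉ Set.Icc 2 3) :
    ∃ S D, IsReducible G S D := by
  obtain hv | hv | hv : G.degree v = 0 ∨ G.degree v = 1 ∨ 4 ≤ G.degree v := by
    rw [Set.mem_Icc] at hv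
    omega
  · have hisolated : ∀ w, ¬ G.Adj v w := (G.degree_eq_zero v).1 hv
    exact ⟨{v}, ∅, by simp, by simp [hisolated], by simp⟩
  · exact exists_isReducible_of_degree_eq_one hv
  · exact ⟨∅, {v}, by simp, by simp, by simp; omega⟩

end Reduction

theorem psi_three_sparse [Fintype V] (G : SimpleGraph V) :
    (psi G 3 : ℚ) ≤ (2 * (Fintype.card V : ℚ) + (G.edgeSet.ncard : ℚ)) / 6 := by
  classical
  suffices hnat : 6 * psi G 3 ≤ 2 * Nat.card V + G.edgeSet.ncard by
    rw [le_div_iff₀' (by norm_num), ← Nat.card_eq_fintype_card]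
    exact_mod_cast hnat
  induction hn : Nat.card V using Nat.strong_induction_on generalizing V with
  | _ n ih =>
    subst hn
    by_cases hdeg : ∀ v, G.degree v ∈ Set.Icc 2 3
    · have hpsi : 2 * psi G 3 + Fintype.card V ≤ 2 * Fintype.card V :=
        mul_psi_three_add_card_le_of_degree_lt fun v ↦ Nat.lt_succ_of_le (hdeg v).2
      have hedges : 2 * Fintype.card V ≤ 2 * G.edgeSet.ncard :=
        mul_card_le_two_mul_ncard_edgeSet fun v ↦ (hdeg v).1
      rw [Nat.card_eq_fintype_card]
      omega
    · push Not at hdeg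
      obtain ⟨v, hv⟩ := hdeg
      obtain ⟨S, D, hred⟩ := exists_isReducible_of_degree_notMem_Icc hv
      exact hred.six_mul_psi_three_le (ih _ hred.ncard_compl_lt (G.induce _) rfl)
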